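/- Let $A = (a_{ij}) \in \mathbb{Z}^{d\times d}$ be lower triangular with positive diagonal entries, $\mathcal{P}(A)$ the simplex with vertices the rows of $A$ and the origin, and $s_{i_1\cdots i_d}$ as defined via the fractional-part recursion. Then the $\delta$-polynomial of $\mathcal{P}(A)$ equals $\delta_{\mathcal{P}(A)}(t) = \sum_{(i_1,\ldots,i_d),\, 1 \leq i_j \leq a_{jj}} t^{d+1-s_{i_1\cdots i_d}}$. -/

import Mathlib

open Set Pointwise

/-- The number of lattice points in the `n`-th dilation of `P ⊆ ℝ^N`. -/
noncomputable def ehr {N : ℕ} (P : Set (Fin N → ℝ)) (n : ℕ) : ℕ :=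
  Set.ncard {x : Fin N → ℤ | (fun i => (x i : ℝ)) ∈ (n : ℝ) • P}

/-- The `i`-th coefficient of `(1-λ)^(d+1) * (1 + ∑_{n ≥ 1} i(P,n) λ^n)`,
i.e. the `i`-th entry of the δ-vector of a `d`-dimensional integral polytope. -/
noncomputable def deltaVec {N : ℕ} (P : Set (Fin N → ℝ)) (d i : ℕ) : ℤ :=
  ∑ j ∈ Finset.range (i + 1),
    (-1 : ℤ) ^ (i - j) * (Nat.choose (d + 1) (i - j) : ℤ) * (ehr P j : ℤ)

/-- `P ⊆ ℝ^N` is an integral polytope of dimension `d`. -/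
def IsIntegralPolytope {N : ℕ} (P : Set (Fin N → ℝ)) (d : ℕ) : Prop :=
  ∃ V : Finset (Fin N → ℤ), V.Nonempty ∧
    P = convexHull ℝ ((fun v i => ((v i : ℝ))) '' (V : Set (Fin N → ℤ))) ∧
    Module.finrank ℝ (vectorSpan ℝ P) = d

/-- `lamRev d A f m` is `λ_k` (0-indexed `k = d - 1 - m`) defined by the downward
recursion `λ_k = (i_k - frac(∑_{h > k} a_{h k} λ_h)) / a_{k k}`, where `i_k = f k`. -/
noncomputable def lamRev (d : ℕ) (A : Matrix (Fin d) (Fin d) ℤ) (f : Fin d → ℕ) :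
    ℕ → ℚ
  | m =>
    if h : m < d then
      let k : Fin d := ⟨d - 1 - m, by omega⟩
      ((f k : ℚ) - Int.fract (∑ r ∈ (Finset.range m).attach,
        (A ⟨d - 1 - r.1, by omega⟩ k : ℚ) * lamRev d A f r.1)) / (A k k : ℚ)
    else 0
termination_by m => m
decreasing_by exact Finset.mem_range.mp r.2

/-- `s_{i_1 ⋯ i_d} = ⌊∑_k λ_k⌋ + 1` for the index tuple `f`. -/
noncomputable def sVal (d : ℕ) (A : Matrix (Fin d) (Fin d) ℤ) (f : Fin d → ℕ) : ℤ :=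
  ⌊∑ m ∈ Finset.range d, lamRev d A f m⌋ + 1

/-!
Write `P(A)` for the simplex spanned by the origin and the rows of `A`. A lattice point of
`n • P(A)` is `c ᵥ* A` for a unique `c ≥ 0` with `∑ c ≤ n`, and such a `c` splits uniquely into its
fractional part, one of finitely many box points `b`, and a vector of natural numbers. A box point
`b` therefore contributes `t ^ ⌈∑ b⌉ / (1 - t) ^ (d + 1)` to the Ehrhart series, so the δ-polynomial
is `∑ t ^ ⌈∑ b⌉`. When `A` is lower triangular, reading the condition "`(1 - b) ᵥ* A` is integral"
from the last column to the first is exactly the fractional-part recursion: the box points are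
the vectors `1 - λ`, and `⌈∑ (1 - λ)⌉ = d - ⌊∑ λ⌋ = d + 1 - s`.
-/

section Counting

variable {ι : Type*} [Fintype ι]

lemma ncard_sum_le_eq_choose (r : ℕ) :
    {m : ι → ℕ | ∑ k, m k ≤ r}.ncard = (Fintype.card ι + r).choose (Fintype.card ι) := by
  classical
  -- The value at `none` is the slack `r - ∑ m`.
  let forget : (Option ι →₀ ℕ) → ι → ℕ := fun f k => f (some k)
  have himage : {m : ι → ℕ | ∑ k, m k ≤ r} =
      forget '' ((Finset.univ : Finset (Option ι)).finsuppAntidiag r) := by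
    ext m
    simp only [Set.mem_ofPred_eq, Set.mem_image, Finset.mem_coe, Finset.mem_finsuppAntidiag,
      Finset.subset_univ, and_true, Fintype.sum_option]
    constructor
    · intro hm
      refine ⟨Finsupp.equivFunOnFinite.symm fun o => o.elim (r - ∑ k, m k) m, ?_, rfl⟩
      exact Nat.sub_add_cancel hm
    · rintro ⟨f, hf, rfl⟩
      exact (Nat.le_add_left _ _).trans_eq hf
  have hinj : Set.InjOn forget ((Finset.univ : Finset (Option ι)).finsuppAntidiag r) := by
    intro f hf g hg hfg
    simp only [Finset.mem_coe, Finset.mem_finsuppAntidiag, Finset.subset_univ, and_true,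
      Fintype.sum_option] at hf hg
    have hsome (k : ι) : f (some k) = g (some k) := congrFun hfg k
    simp only [hsome] at hf
    ext (_ | k)
    · exact Nat.add_right_cancel (hf.trans hg.symm)
    · exact hsome k
  rw [himage, hinj.ncard_image, Set.ncard_coe_finset, Finset.card_finsuppAntidiag_nat_eq_choose,
    Finset.card_univ, Fintype.card_option, Nat.succ_add_sub_one, Nat.choose_symm_add]

lemma finite_setOf_add_sum_le (h n : ℕ) : {m : ι → ℕ | h + ∑ k, m k ≤ n}.Finite :=
  (Set.Finite.pi' fun _ => Set.finite_Iic n).subset fun m (hm : h + ∑ k, m k ≤ n) k =>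
    (Finset.single_le_sum (fun _ _ => Nat.zero_le _) (Finset.mem_univ k)).trans
      ((Nat.le_add_left _ _).trans hm)

lemma mk_ncard_add_sum_le (R : Type*) [CommRing R] (h : ℕ) :
    PowerSeries.mk (fun n => ({m : ι → ℕ | h + ∑ k, m k ≤ n}.ncard : R)) =
      PowerSeries.X ^ h * PowerSeries.mk 1 ^ (Fintype.card ι + 1) := by
  ext n
  rw [PowerSeries.coeff_mk, PowerSeries.mk_one_pow_eq_mk_choose_add, PowerSeries.coeff_X_pow_mul']
  split_ifs with hn
  · rw [PowerSeries.coeff_mk, ← ncard_sum_le_eq_choose]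
    simp only [Nat.le_sub_iff_add_le' hn]
  · have hempty : {m : ι → ℕ | h + ∑ k, m k ≤ n} = ∅ :=
      Set.eq_empty_of_forall_notMem fun m hm => hn ((Nat.le_add_right _ _).trans hm)
    rw [hempty, Set.ncard_empty, Nat.cast_zero]

end Counting

section SolidSimplex

/-- The `r`-th dilation of the standard solid simplex: the nonnegative vectors with coordinate sum
at most `r`. The barycentric coordinates of the points of `r • conv(0, v₁, …, v_d)`, that at `0`
omitted, range over it. -/
def solidSimplex (ι : Type*) [Fintype ι] {𝕜 : Type*} [AddCommMonoid 𝕜] [LE 𝕜] (r : 𝕜) :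
    Set (ι → 𝕜) :=
  {c | 0 ≤ c ∧ ∑ k, c k ≤ r}

variable {ι 𝕜 E : Type*} [Fintype ι] [Field 𝕜] [LinearOrder 𝕜] [IsStrictOrderedRing 𝕜]
  [AddCommGroup E] [Module 𝕜 E]

lemma convexHull_insert_zero_range (v : ι → E) :
    convexHull 𝕜 (insert 0 (Set.range v)) =
      Fintype.linearCombination 𝕜 v '' solidSimplex ι (1 : 𝕜) := by
  classical
  let w : Option ι → E := fun o => o.elim 0 v
  have hrange : insert 0 (Set.range v) =
      Fintype.linearCombination 𝕜 w '' Set.range fun o => Pi.single o 1 := by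
    rw [← Set.range_comp]
    ext x
    simp [w, Option.exists, eq_comm, Fintype.linearCombination_apply_single]
  rw [hrange, ← LinearMap.image_convexHull, convexHull_rangle_single_eq_stdSimplex]
  ext x
  constructor
  · rintro ⟨c, ⟨hc, hsum⟩, rfl⟩
    rw [Fintype.sum_option] at hsum
    refine ⟨fun k => c (some k), ⟨fun k => hc _, ?_⟩, ?_⟩
    · linarith [hc none]
    · simp [w, Fintype.linearCombination_apply, Fintype.sum_option]
  · rintro ⟨c, ⟨hc, hsum⟩, rfl⟩
    refine ⟨fun o => o.elim (1 - ∑ k, c k) c, ⟨?_, by simp [Fintype.sum_option]⟩, ?_⟩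
    · rintro (_ | k)
      exacts [sub_nonneg.2 hsum, hc k]
    · simp [w, Fintype.linearCombination_apply, Fintype.sum_option]

lemma smul_solidSimplex_one {r : 𝕜} (hr : 0 ≤ r) :
    r • solidSimplex ι (1 : 𝕜) = solidSimplex ι r := by
  ext c
  rcases hr.eq_or_lt with rfl | hpos
  · have hne : (solidSimplex ι (1 : 𝕜)).Nonempty := ⟨0, le_rfl, by simp⟩
    rw [Set.zero_smul_set hne, Set.mem_zero]
    refine ⟨fun hc => ⟨hc.ge, by simp [hc]⟩, fun ⟨hc, hsum⟩ => funext fun k => ?_⟩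
    exact (Finset.sum_eq_zero_iff_of_nonneg fun k _ => hc k).1
      (hsum.antisymm (Finset.sum_nonneg fun k _ => hc k)) k (Finset.mem_univ k)
  · rw [Set.mem_smul_set_iff_inv_smul_mem₀ hpos.ne']
    refine and_congr (smul_nonneg_iff_nonneg_of_pos_left (inv_pos.2 hpos)) ?_
    simp only [Pi.smul_apply, smul_eq_mul, ← Finset.mul_sum, inv_mul_le_one₀ hpos]

lemma smul_convexHull_insert_zero_range (v : ι → E) {r : 𝕜} (hr : 0 ≤ r) :
    r • convexHull 𝕜 (insert 0 (Set.range v)) =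
      Fintype.linearCombination 𝕜 v '' solidSimplex ι r := by
  rw [convexHull_insert_zero_range, ← smul_solidSimplex_one hr, image_smul_set]

end SolidSimplex

section BoxPoints

variable {ι 𝕜 : Type*} [Ring 𝕜] [LinearOrder 𝕜]

/-- The box points of a group `L` of vectors: its elements in the half-open unit cube. For the group
of coordinate vectors of the lattice points with respect to the edges of a lattice simplex, they are
the lattice points of the fundamental parallelepiped. -/
def boxPoints (L : AddSubgroup (ι → 𝕜)) : Set (ι → 𝕜) :=
  L ∩ Set.univ.pi fun _ => Set.Ico 0 1

variable [IsStrictOrderedRing 𝕜] {L : AddSubgroup (ι → 𝕜)}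

lemma image_one_sub_inter_pi_Ioc (hL : ∀ m : ι → ℤ, (fun k => (m k : 𝕜)) ∈ L) :
    (1 - ·) '' ((L : Set (ι → 𝕜)) ∩ Set.univ.pi fun _ => Set.Ioc 0 1) = boxPoints L := by
  have hone : (1 : ι → 𝕜) ∈ L := by simpa [← Pi.one_def] using hL 1
  rw [(Function.Involutive.image_eq_preimage_symm fun c : ι → 𝕜 => sub_sub_cancel 1 c)]
  ext c
  refine and_congr ?_ (forall₂_congr fun k _ => ?_)
  · change 1 - c ∈ L ↔ c ∈ L
    rw [sub_eq_add_neg, add_mem_cancel_left hone, neg_mem_iff]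
  · simp [and_comm]

variable [FloorRing 𝕜]

lemma fract_add_natCast_of_mem_boxPoints {b : ι → 𝕜} (hb : b ∈ boxPoints L) (m : ι → ℕ) (k : ι) :
    Int.fract ((b + (m · : ι → 𝕜)) k) = b k := by
  rw [Pi.add_apply, Int.fract_add_natCast]
  exact Int.fract_eq_self.2 (hb.2 k trivial)

variable [Fintype ι]

lemma add_natCast_mem_solidSimplex_iff {b : ι → 𝕜} (hb : 0 ≤ b) (m : ι → ℕ) (n : ℕ) :
    b + (m · : ι → 𝕜) ∈ solidSimplex ι (n : 𝕜) ↔ ⌈∑ k, b k⌉₊ + ∑ k, m k ≤ n := by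
  have hnonneg : 0 ≤ b + (m · : ι → 𝕜) := add_nonneg hb fun k => Nat.cast_nonneg (m k)
  have hsum : ∑ k, (b + (m · : ι → 𝕜)) k = ∑ k, b k + (∑ k, m k : ℕ) := by
    simp [Finset.sum_add_distrib]
  rw [← Nat.ceil_add_natCast (Finset.sum_nonneg fun k _ => hb k), Nat.ceil_le, ← hsum]
  exact and_iff_right hnonneg

lemma inter_solidSimplex_eq_biUnion (hL : ∀ m : ι → ℤ, (fun k => (m k : 𝕜)) ∈ L) (n : ℕ) :
    (L : Set (ι → 𝕜)) ∩ solidSimplex ι (n : 𝕜) =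
      ⋃ b ∈ boxPoints L, (fun m : ι → ℕ => b + (m · : ι → 𝕜)) ''
        {m | ⌈∑ k, b k⌉₊ + ∑ k, m k ≤ n} := by
  ext c
  simp only [Set.mem_iUnion₂, Set.mem_image, exists_prop]
  constructor
  · rintro ⟨hcL, hc⟩
    let b : ι → 𝕜 := fun k => Int.fract (c k)
    let m : ι → ℕ := fun k => ⌊c k⌋₊
    have hsplit : b + (m · : ι → 𝕜) = c := funext fun k => by
      rw [Pi.add_apply, natCast_floor_eq_intCast_floor (hc.1 k)]
      exact Int.fract_add_floor (c k)
    have hbL : b ∈ L := by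
      have hfloor : b = c - fun k => (⌊c k⌋ : 𝕜) := rfl
      exact hfloor ▸ sub_mem hcL (hL _)
    refine ⟨b, ⟨hbL, fun k _ => ⟨Int.fract_nonneg _, Int.fract_lt_one _⟩⟩, m, ?_, hsplit⟩
    exact (add_natCast_mem_solidSimplex_iff (fun k => Int.fract_nonneg _) m n).1 (by rwa [hsplit])
  · rintro ⟨b, hb, m, hm, rfl⟩
    refine ⟨add_mem hb.1 (by simpa using hL fun k => m k), ?_⟩
    exact (add_natCast_mem_solidSimplex_iff (fun k => (hb.2 k trivial).1) m n).2 hm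

lemma ncard_inter_solidSimplex (hL : ∀ m : ι → ℤ, (fun k => (m k : 𝕜)) ∈ L)
    {B : Finset (ι → 𝕜)} (hB : ↑B = boxPoints L) (n : ℕ) :
    ((L : Set (ι → 𝕜)) ∩ solidSimplex ι (n : 𝕜)).ncard =
      ∑ b ∈ B, {m : ι → ℕ | ⌈∑ k, b k⌉₊ + ∑ k, m k ≤ n}.ncard := by
  have hdisjoint : (B : Set (ι → 𝕜)).PairwiseDisjoint fun b =>
      (fun m : ι → ℕ => b + (m · : ι → 𝕜)) '' {m | ⌈∑ k, b k⌉₊ + ∑ k, m k ≤ n} := by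
    intro b hb b' hb' hne
    refine Set.disjoint_left.2 ?_
    rintro _ ⟨m, -, rfl⟩ ⟨m', -, heq⟩
    rw [hB] at hb hb'
    refine hne (funext fun k => ?_)
    calc b k = Int.fract ((b + (m · : ι → 𝕜)) k) := (fract_add_natCast_of_mem_boxPoints hb m k).symm
      _ = Int.fract ((b' + (m' · : ι → 𝕜)) k) := congrArg (Int.fract <| · k) heq.symm
      _ = b' k := fract_add_natCast_of_mem_boxPoints hb' m' k
  have hinj (b : ι → 𝕜) : Function.Injective fun m : ι → ℕ => b + (m · : ι → 𝕜) :=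
    (add_right_injective b).comp fun m m' h => funext fun k => Nat.cast_injective (congrFun h k)
  rw [inter_solidSimplex_eq_biUnion hL, ← hB, B.finite_toSet.ncard_biUnion
    (fun b _ => (finite_setOf_add_sum_le _ _).image _) hdisjoint, finsum_mem_coe_finset]
  exact Finset.sum_congr rfl fun b _ => Set.ncard_image_of_injective _ (hinj b)

lemma mk_ncard_inter_solidSimplex (R : Type*) [CommRing R]
    (hL : ∀ m : ι → ℤ, (fun k => (m k : 𝕜)) ∈ L) {B : Finset (ι → 𝕜)} (hB : ↑B = boxPoints L) :
    PowerSeries.mk (fun n => (((L : Set (ι → 𝕜)) ∩ solidSimplex ι (n : 𝕜)).ncard : R)) =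
      (∑ b ∈ B, PowerSeries.X ^ ⌈∑ k, b k⌉₊) * PowerSeries.mk 1 ^ (Fintype.card ι + 1) := by
  simp only [Finset.sum_mul, ← mk_ncard_add_sum_le, ncard_inter_solidSimplex hL hB, Nat.cast_sum]
  ext n
  simp only [PowerSeries.coeff_mk, map_sum]

lemma ceil_sum_le_card_of_mem_boxPoints {b : ι → 𝕜} (hb : b ∈ boxPoints L) :
    ⌈∑ k, b k⌉₊ ≤ Fintype.card ι := by
  refine Nat.ceil_le.2 ((Finset.sum_le_sum fun k _ => (hb.2 k trivial).2.le).trans_eq ?_)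
  simp

end BoxPoints

section DeltaPolynomial

lemma coeff_one_sub_X_pow (R : Type*) [CommRing R] (d n : ℕ) :
    PowerSeries.coeff n ((1 - PowerSeries.X : PowerSeries R) ^ d) =
      (-1) ^ n * (d.choose n : R) := by
  have hrescale : (1 - PowerSeries.X : PowerSeries R) ^ d =
      PowerSeries.rescale (-1) ((1 + Polynomial.X : Polynomial R) ^ d : Polynomial R) := by
    simp [sub_eq_add_neg]
  rw [hrescale, PowerSeries.coeff_rescale, Polynomial.coeff_coe, Polynomial.coeff_one_add_X_pow]

variable {N : ℕ} (P : Set (Fin N → ℝ)) (d : ℕ)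

/-- The Ehrhart series `∑ₙ i(P, n) tⁿ`. -/
noncomputable def ehrSeries : PowerSeries ℤ :=
  PowerSeries.mk fun n => (ehr P n : ℤ)

/-- The δ-polynomial `∑ᵢ δᵢ tⁱ` of a `d`-dimensional polytope `P`. -/
noncomputable def deltaPoly : Polynomial ℤ :=
  ∑ i ∈ Finset.range (d + 1), Polynomial.C (deltaVec P d i) * Polynomial.X ^ i

lemma deltaVec_eq_coeff (i : ℕ) :
    deltaVec P d i = PowerSeries.coeff i (ehrSeries P * (1 - PowerSeries.X) ^ (d + 1)) := by
  rw [PowerSeries.coeff_mul, Finset.Nat.sum_antidiagonal_eq_sum_range_succ fun a b =>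
    PowerSeries.coeff a (ehrSeries P) *
      PowerSeries.coeff b ((1 - PowerSeries.X : PowerSeries ℤ) ^ (d + 1))]
  simp only [deltaVec, ehrSeries, PowerSeries.coeff_mk, coeff_one_sub_X_pow]
  exact Finset.sum_congr rfl fun j _ => mul_comm _ _

lemma deltaPoly_eq_trunc :
    deltaPoly P d = (ehrSeries P * (1 - PowerSeries.X) ^ (d + 1)).trunc (d + 1) := by
  simp only [deltaPoly, PowerSeries.trunc_apply, ← Finset.range_eq_Ico, deltaVec_eq_coeff,
    Polynomial.C_mul_X_pow_eq_monomial]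

variable {P d}

lemma deltaPoly_eq_of_ehrSeries_eq {p : Polynomial ℤ} (hdeg : p.natDegree ≤ d)
    (h : ehrSeries P = p * (PowerSeries.mk 1 : PowerSeries ℤ) ^ (d + 1)) : deltaPoly P d = p := by
  rw [deltaPoly_eq_trunc, h, mul_assoc, ← mul_pow, PowerSeries.mk_one_mul_one_sub_eq_one, one_pow,
    mul_one, PowerSeries.trunc_coe_eq_self (Nat.lt_succ_of_le hdeg)]

end DeltaPolynomial

section LatticeSimplex

open Matrix

variable {ι κ : Type*} [Fintype ι]

/-- The simplex `P(M)` with vertices the origin and the rows of `M`. -/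
def rowSimplex (M : Matrix ι κ ℤ) : Set (κ → ℝ) :=
  convexHull ℝ (insert 0 (Set.range fun i j => (M i j : ℝ)))

/-- The coefficient vectors `c` for which the combination `c ᵥ* M` of the rows of `M` is a lattice
point. -/
def coordLattice (M : Matrix ι κ ℤ) : AddSubgroup (ι → ℝ) :=
  ((Int.castAddHom ℝ).compLeft κ).range.comap (M.map ((↑) : ℤ → ℝ)).vecMulLinear.toAddMonoidHom

lemma mem_coordLattice_iff {M : Matrix ι κ ℤ} {c : ι → ℝ} :
    c ∈ coordLattice M ↔ ∀ j, ∃ z : ℤ, (c ᵥ* M.map ((↑) : ℤ → ℝ)) j = z := by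
  rw [Classical.skolem]
  exact exists_congr fun x => eq_comm.trans funext_iff

lemma intCast_mem_coordLattice (M : Matrix ι κ ℤ) (m : ι → ℤ) :
    (fun k => (m k : ℝ)) ∈ coordLattice M :=
  mem_coordLattice_iff.2 fun j => ⟨(m ᵥ* M) j, by simp [vecMul, dotProduct]⟩

lemma smul_rowSimplex (M : Matrix ι κ ℤ) {r : ℝ} (hr : 0 ≤ r) :
    r • rowSimplex M = (· ᵥ* M.map ((↑) : ℤ → ℝ)) '' solidSimplex ι r := by
  rw [rowSimplex, smul_convexHull_insert_zero_range _ hr]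
  exact congrArg (· '' _) (funext fun c => (vecMul_eq_sum c _).symm)

variable {N : ℕ} {M : Matrix ι (Fin N) ℤ}

lemma ehr_rowSimplex (hM : LinearIndependent ℝ (M.map ((↑) : ℤ → ℝ)).row) (n : ℕ) :
    ehr (rowSimplex M) n =
      ((coordLattice M : Set (ι → ℝ)) ∩ solidSimplex ι (n : ℝ)).ncard := by
  have hcast : Function.Injective fun (x : Fin N → ℤ) i => (x i : ℝ) := fun x y h =>
    funext fun i => Int.cast_injective (congrFun h i)
  have hlattice : (coordLattice M : Set (ι → ℝ)) = (· ᵥ* M.map ((↑) : ℤ → ℝ)) ⁻¹'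
      Set.range fun (x : Fin N → ℤ) i => (x i : ℝ) := rfl
  rw [hlattice, ← Set.ncard_image_of_injective _ (vecMul_injective_iff.2 hM),
    Set.image_preimage_inter, ← smul_rowSimplex M n.cast_nonneg, Set.inter_comm,
    ← Set.image_preimage_eq_inter_range, Set.ncard_image_of_injective _ hcast]
  rfl

theorem deltaPoly_rowSimplex (hM : LinearIndependent ℝ (M.map ((↑) : ℤ → ℝ)).row)
    {B : Finset (ι → ℝ)} (hB : ↑B = boxPoints (coordLattice M)) :
    deltaPoly (rowSimplex M) (Fintype.card ι) =
      ∑ b ∈ B, (Polynomial.X : Polynomial ℤ) ^ ⌈∑ k, b k⌉₊ := by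
  refine deltaPoly_eq_of_ehrSeries_eq ?_ ?_
  · refine Polynomial.natDegree_sum_le_of_forall_le _ _ fun b hb => ?_
    rw [Polynomial.natDegree_X_pow]
    exact ceil_sum_le_card_of_mem_boxPoints (hB ▸ Finset.mem_coe.2 hb)
  · simp only [ehrSeries, ehr_rowSimplex hM]
    rw [mk_ncard_inter_solidSimplex ℤ (intCast_mem_coordLattice M) hB,
      ← Polynomial.coeToPowerSeries.ringHom_apply, map_sum]
    simp only [Polynomial.coeToPowerSeries.ringHom_apply, Polynomial.coe_pow, Polynomial.coe_X]

end LatticeSimplex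

section LowerTriangular

open Matrix

variable {d : ℕ} {A : Matrix (Fin d) (Fin d) ℤ}

/-- The sum `∑_{h > k} a_{hk} λ_h` whose fractional part enters the recursion for `λ_k`. -/
def tailSum (A : Matrix (Fin d) (Fin d) ℤ) (l : Fin d → ℝ) (k : Fin d) : ℝ :=
  ∑ h ∈ Finset.Ioi k, (A h k : ℝ) * l h

/-- The vector `λ` of the index tuple `f`, with the indexing by `Fin d` that `lamRev` reverses. -/
noncomputable def lam (A : Matrix (Fin d) (Fin d) ℤ) (f : Fin d → ℕ) (k : Fin d) : ℝ :=
  lamRev d A f k.rev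

/-- The index tuples `(i_1, …, i_d)` with `1 ≤ i_j ≤ a_{jj}`. -/
def indexTuples (A : Matrix (Fin d) (Fin d) ℤ) : Finset (Fin d → ℕ) :=
  Fintype.piFinset fun j => Finset.Icc 1 (A j j).toNat

lemma mem_indexTuples {f : Fin d → ℕ} :
    f ∈ indexTuples A ↔ ∀ k, (f k : ℤ) ∈ Set.Icc 1 (A k k) := by
  rw [indexTuples, Fintype.mem_piFinset]
  refine forall_congr' fun k => ?_
  rw [Finset.mem_Icc, Set.mem_Icc]
  omega

lemma sum_range_val_rev {M : Type*} [AddCommMonoid M] (k : Fin d) (g : Fin d → ℕ → M) :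
    ∑ r ∈ Finset.range k.rev, g ⟨d - 1 - r, by have := k.isLt; omega⟩ r =
      ∑ h ∈ Finset.Ioi k, g h h.rev := by
  have hk := k.isLt
  refine Finset.sum_bij' (fun r _ => ⟨d - 1 - r, by omega⟩) (fun h _ => h.rev) ?_ ?_ ?_ ?_ ?_ <;>
    simp only [Finset.mem_range, Finset.mem_Ioi, Fin.lt_def, Fin.ext_iff, Fin.val_rev]
  · omega
  · omega
  · omega
  · omega
  · intro r hr
    congr 1
    omega

lemma lam_eq (f : Fin d → ℕ) (k : Fin d) :
    lam A f k = (f k - Int.fract (tailSum A (lam A f) k)) / A k k := by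
  have hk : (⟨d - 1 - k.rev, by omega⟩ : Fin d) = k := by
    ext
    simp only [Fin.val_rev]
    omega
  have hsum := Finset.sum_attach (Finset.range k.rev) fun r =>
    (A ⟨d - 1 - r, by omega⟩ k : ℚ) * lamRev d A f r
  rw [sum_range_val_rev k fun h r => (A h k : ℚ) * lamRev d A f r] at hsum
  rw [lam, lamRev, dif_pos k.rev.isLt]
  simp only [hk, hsum, tailSum, lam]
  push_cast [Rat.cast_fract]
  rfl

lemma eq_lam_iff (hdiag : ∀ i, 0 < A i i) {f : Fin d → ℕ} {l : Fin d → ℝ} :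
    l = lam A f ↔ ∀ k, A k k * l k + Int.fract (tailSum A l k) = f k := by
  have hne (k : Fin d) : (A k k : ℝ) ≠ 0 := by exact_mod_cast (hdiag k).ne'
  have hlam (k : Fin d) : A k k * lam A f k + Int.fract (tailSum A (lam A f) k) = f k := by
    rw [lam_eq, mul_div_cancel₀ _ (hne k), sub_add_cancel]
  refine ⟨fun h => h ▸ hlam, fun hl => funext fun k => ?_⟩
  induction k using WellFoundedGT.induction with
  | ind k ih =>
    have htail : tailSum A l k = tailSum A (lam A f) k :=
      Finset.sum_congr rfl fun h hh => by rw [ih h (Finset.mem_Ioi.1 hh)]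
    refine mul_left_cancel₀ (hne k) (add_right_cancel (b := Int.fract (tailSum A l k)) ?_)
    rw [hl k, htail, hlam k]

lemma lam_injective (hdiag : ∀ i, 0 < A i i) : Function.Injective (lam A) := fun f g h =>
  funext fun k => by
    have hf := (eq_lam_iff hdiag).1 (rfl : lam A f = _) k
    rw [(eq_lam_iff hdiag).1 h k] at hf
    exact_mod_cast hf.symm

lemma vecMul_apply_of_isLowerTriangular (hlow : A.IsLowerTriangular) (l : Fin d → ℝ) (k : Fin d) :
    (l ᵥ* A.map ((↑) : ℤ → ℝ)) k = A k k * l k + tailSum A l k := by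
  have hsupport : ∑ h ∈ Finset.Ici k, (A h k : ℝ) * l h = ∑ h, (A h k : ℝ) * l h := by
    refine Finset.sum_subset (Finset.subset_univ _) fun h _ hh => ?_
    rw [hlow (not_le.1 (by simpa using hh)), Int.cast_zero, zero_mul]
  rw [tailSum, Finset.add_sum_Ioi_eq_sum_Ici (f := fun h => (A h k : ℝ) * l h) k, hsupport]
  simp only [vecMul, dotProduct, map_apply, mul_comm]

lemma mem_coordLattice_iff_of_isLowerTriangular (hlow : A.IsLowerTriangular) {l : Fin d → ℝ} :
    l ∈ coordLattice A ↔ ∀ k, ∃ z : ℤ, A k k * l k + Int.fract (tailSum A l k) = z := by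
  simp only [mem_coordLattice_iff, vecMul_apply_of_isLowerTriangular hlow]
  refine forall_congr' fun k => (Equiv.subRight ⌊tailSum A l k⌋).exists_congr fun z => ?_
  rw [Equiv.subRight_apply, Int.cast_sub, ← Int.self_sub_floor, ← add_sub_assoc, sub_left_inj]

lemma mem_Ioc_zero_one_iff_of_mul_add_eq {𝕜 : Type*} [Field 𝕜] [LinearOrder 𝕜]
    [IsStrictOrderedRing 𝕜] {a z : ℤ} (ha : 0 < a) {x ε : 𝕜} (hε : ε ∈ Set.Ico 0 1)
    (h : a * x + ε = z) : x ∈ Set.Ioc 0 1 ↔ z ∈ Set.Icc 1 a := by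
  have ha' : (0 : 𝕜) < a := by exact_mod_cast ha
  obtain ⟨hε₀, hε₁⟩ := hε
  constructor
  · rintro ⟨hx₀, hx₁⟩
    have hpos : (0 : 𝕜) < z := by linarith [mul_pos ha' hx₀]
    have hlt : (z : 𝕜) < a + 1 := by linarith [mul_le_of_le_one_right ha'.le hx₁]
    exact ⟨by exact_mod_cast hpos, Int.lt_add_one_iff.1 (by exact_mod_cast hlt)⟩
  · rintro ⟨hz₁, hza⟩
    have hz₁' : (1 : 𝕜) ≤ z := by exact_mod_cast hz₁
    have hza' : (z : 𝕜) ≤ a := by exact_mod_cast hza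
    exact ⟨pos_of_mul_pos_right (by linarith) ha'.le, le_of_mul_le_mul_left (by linarith) ha'⟩

lemma image_lam_indexTuples (hlow : A.IsLowerTriangular) (hdiag : ∀ i, 0 < A i i) :
    lam A '' indexTuples A =
      (coordLattice A : Set (Fin d → ℝ)) ∩ Set.univ.pi fun _ => Set.Ioc 0 1 := by
  ext l
  constructor
  · rintro ⟨f, hf, rfl⟩
    have hrec := (eq_lam_iff hdiag).1 (rfl : lam A f = _)
    refine ⟨(mem_coordLattice_iff_of_isLowerTriangular hlow).2 fun k => ⟨f k, ?_⟩, fun k _ => ?_⟩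
    · exact_mod_cast hrec k
    · exact (mem_Ioc_zero_one_iff_of_mul_add_eq (z := f k) (hdiag k)
        ⟨Int.fract_nonneg _, Int.fract_lt_one _⟩ (mod_cast hrec k)).2 (mem_indexTuples.1 hf k)
  · rintro ⟨hl, hcube⟩
    choose z hz using (mem_coordLattice_iff_of_isLowerTriangular hlow).1 hl
    have hmem (k : Fin d) : z k ∈ Set.Icc 1 (A k k) :=
      (mem_Ioc_zero_one_iff_of_mul_add_eq (hdiag k)
        ⟨Int.fract_nonneg _, Int.fract_lt_one _⟩ (hz k)).1 (hcube k trivial)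
    lift z to Fin d → ℕ using fun k => zero_le_one.trans (hmem k).1
    exact ⟨z, mem_indexTuples.2 hmem, ((eq_lam_iff hdiag).2 (mod_cast hz)).symm⟩

lemma image_one_sub_lam_indexTuples (hlow : A.IsLowerTriangular) (hdiag : ∀ i, 0 < A i i) :
    (fun f => 1 - lam A f) '' indexTuples A = boxPoints (coordLattice A) := by
  rw [← image_one_sub_inter_pi_Ioc (intCast_mem_coordLattice A),
    ← image_lam_indexTuples hlow hdiag, Set.image_image]

lemma linearIndependent_row_of_isLowerTriangular (hlow : A.IsLowerTriangular)
    (hdiag : ∀ i, 0 < A i i) : LinearIndependent ℝ (A.map ((↑) : ℤ → ℝ)).row := by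
  have hdet : A.det ≠ 0 := by
    rw [det_of_isLowerTriangular A hlow]
    exact Finset.prod_ne_zero_iff.2 fun i _ => (hdiag i).ne'
  have hmap : (A.map ((↑) : ℤ → ℝ)).det = A.det := (Int.cast_det A).symm
  exact linearIndependent_rows_of_det_ne_zero (hmap ▸ Int.cast_ne_zero.2 hdet)

lemma sVal_eq_floor_sum_lam (A : Matrix (Fin d) (Fin d) ℤ) (f : Fin d → ℕ) :
    sVal d A f = ⌊∑ k, lam A f k⌋ + 1 := by
  have hsum : ∑ k, lam A f k = ((∑ m ∈ Finset.range d, lamRev d A f m : ℚ) : ℝ) := by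
    rw [Finset.sum_range, ← Equiv.sum_comp Fin.revPerm, Rat.cast_sum]
    simp [lam]
  rw [sVal, hsum, Rat.floor_cast]

lemma ceil_sum_one_sub_lam (A : Matrix (Fin d) (Fin d) ℤ) (f : Fin d → ℕ) :
    ⌈∑ k, (1 - lam A f) k⌉₊ = ((d : ℤ) + 1 - sVal d A f).toNat := by
  have hsum : ∑ k, (1 - lam A f) k = -∑ k, lam A f k + (d : ℤ) := by
    simp [sub_eq_neg_add, Finset.sum_add_distrib]
  rw [← Int.ceil_toNat, hsum, Int.ceil_add_intCast, Int.ceil_neg, sVal_eq_floor_sum_lam]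
  congr 1
  ring

end LowerTriangular

theorem stmt4 (d : ℕ) (A : Matrix (Fin d) (Fin d) ℤ)
    (hlow : ∀ i j, i < j → A i j = 0) (hdiag : ∀ i, 0 < A i i)
    (P : Set (Fin d → ℝ))
    (hP : P = convexHull ℝ
      (insert (0 : Fin d → ℝ) (Set.range fun i j => (A i j : ℝ)))) :
    ∑ i ∈ Finset.range (d + 1), Polynomial.C (deltaVec P d i) * Polynomial.X ^ i
    = ∑ f ∈ Fintype.piFinset (fun j : Fin d => Finset.Icc 1 (A j j).toNat),
        (Polynomial.X : Polynomial ℤ) ^ ((d : ℤ) + 1 - sVal d A f).toNat := by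
  have hA : A.IsLowerTriangular := fun i j hij => hlow i j hij
  have hbox : ↑((indexTuples A).image fun f => 1 - lam A f) = boxPoints (coordLattice A) := by
    rw [Finset.coe_image, image_one_sub_lam_indexTuples hA hdiag]
  have hinj : Function.Injective fun f => 1 - lam A f :=
    (sub_right_injective).comp (lam_injective hdiag)
  have hdelta := deltaPoly_rowSimplex (linearIndependent_row_of_isLowerTriangular hA hdiag) hbox
  rw [Fintype.card_fin, Finset.sum_image hinj.injOn] at hdelta
  simp only [ceil_sum_one_sub_lam] at hdelta
  rw [hP]
  exact hdelta
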